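/- Let b > 0, let Ω_R = (-R₁/2, R₁/2) × (-R₂/2, R₂/2) with R₁, R₂ > 0, and let λ > 1. Then N(λ; q_b, Ω_R) ≤ (b |Ω_R| / 2π) · #{ n ∈ ℕ : (2n+1)b < λ }. -/

import Mathlib

open MeasureTheory Real Filter

noncomputable section

/-- The upper half-plane ℍ as a subset of ℝ². -/
def UHP : Set (ℝ × ℝ) := {p : ℝ × ℝ | 0 < p.2}

/-- The hyperbolic measure `dv = y⁻² dx dy` on ℍ. -/
def volH : Measure (ℝ × ℝ) :=
  (volume.restrict UHP).withDensity fun p => ENNReal.ofReal ((p.2 ^ 2)⁻¹)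

/-- x-derivative of a complex function on ℝ². -/
def dX (f : ℝ × ℝ → ℂ) (p : ℝ × ℝ) : ℂ := fderiv ℝ f p (1, 0)

/-- y-derivative of a complex function on ℝ². -/
def dY (f : ℝ × ℝ → ℂ) (p : ℝ × ℝ) : ℂ := fderiv ℝ f p (0, 1)

/-- x-derivative of a real function on ℝ². -/
def dXr (f : ℝ × ℝ → ℝ) (p : ℝ × ℝ) : ℝ := fderiv ℝ f p (1, 0)

/-- y-derivative of a real function on ℝ². -/
def dYr (f : ℝ × ℝ → ℝ) (p : ℝ × ℝ) : ℝ := fderiv ℝ f p (0, 1)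

/-- The magnetic field `b̃ = y² (∂ₓA₂ - ∂_yA₁)`. -/
def fieldB (A₁ A₂ : ℝ × ℝ → ℝ) (p : ℝ × ℝ) : ℝ := p.2 ^ 2 * (dXr A₂ p - dYr A₁ p)

/-- The magnetic intensity `b = |b̃|`. -/
def intenB (A₁ A₂ : ℝ × ℝ → ℝ) (p : ℝ × ℝ) : ℝ := |fieldB A₁ A₂ p|

/-- Smooth compactly supported test functions with support inside a set `Ω`. -/
def IsTestOn (Ω : Set (ℝ × ℝ)) (f : ℝ × ℝ → ℂ) : Prop :=
  ContDiff ℝ (⊤ : ℕ∞) f ∧ HasCompactSupport f ∧ tsupport f ⊆ Ω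

/-- The quadratic form of the magnetic Laplacian on ℍ. -/
def qA (A₁ A₂ : ℝ × ℝ → ℝ) (f : ℝ × ℝ → ℂ) : ℝ :=
  ∫ p, p.2 ^ 2 * (‖-Complex.I * dX f p - (A₁ p : ℂ) * f p‖ ^ 2 +
    ‖-Complex.I * dY f p - (A₂ p : ℂ) * f p‖ ^ 2) ∂volH

/-- hyperbolic distance from `(x,y)` to `(0,1)`. -/
def hDist (p : ℝ × ℝ) : ℝ :=
  2 * Real.arsinh (Real.sqrt (p.1 ^ 2 + (p.2 - 1) ^ 2) / (2 * Real.sqrt p.2))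

/-- (H1) : the magnetic intensity tends to +∞ at infinity. -/
def H1 (A₁ A₂ : ℝ × ℝ → ℝ) : Prop :=
  ∀ M : ℝ, ∃ R : ℝ, ∀ p ∈ UHP, R ≤ hDist p → M ≤ intenB A₁ A₂ p

/-- (H2) : control of the derivative of the magnetic field. -/
def H2 (C₀ : ℝ) (A₁ A₂ : ℝ × ℝ → ℝ) : Prop :=
  ∀ p ∈ UHP, p.2 * Real.sqrt ((dXr (fieldB A₁ A₂) p) ^ 2 + (dYr (fieldB A₁ A₂) p) ^ 2)
    ≤ C₀ * (intenB A₁ A₂ p + 1)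

/-- Counting function of a quadratic form `q` with form domain `dom` and squared
norm `nsq`, via Glazman's lemma. -/
def NN (q : (ℝ × ℝ → ℂ) → ℝ) (dom : Set (ℝ × ℝ → ℂ)) (nsq : (ℝ × ℝ → ℂ) → ℝ)
    (lam : ℝ) : ℕ :=
  sSup {n : ℕ | ∃ V : Submodule ℂ (ℝ × ℝ → ℂ), (V : Set (ℝ × ℝ → ℂ)) ⊆ dom ∧
    Module.finrank ℂ V = n ∧ ∀ u ∈ V, u ≠ 0 → q u < lam * nsq u}

/-- Heaviside function `[ρ]₊⁰`. -/
def heav (ρ : ℝ) : ℝ := if 0 < ρ then 1 else 0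


/-- The quadratic form of the Landau Hamiltonian with constant field `b` on ℝ². -/
def qb (b : ℝ) (u : ℝ × ℝ → ℂ) : ℝ :=
  ∫ p : ℝ × ℝ, (‖-Complex.I * dX u p - ((b * p.2 / 2 : ℝ) : ℂ) * u p‖ ^ 2 +
    ‖-Complex.I * dY u p + ((b * p.1 / 2 : ℝ) : ℂ) * u p‖ ^ 2)

/-- Dirichlet eigenvalue counting function of the Landau Hamiltonian on `Ω`. -/
def NNb (b lam : ℝ) (Ω : Set (ℝ × ℝ)) : ℕ :=
  NN (qb b) {u | IsTestOn Ω u} (fun u => ∫ p : ℝ × ℝ, ‖u p‖ ^ 2) lam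

/-- Number of Landau levels below `lam` : `#{n ∈ ℕ : (2n+1)b < lam}`. -/
def landauCount (b lam : ℝ) : ℕ := Nat.card {n : ℕ | (2 * (n : ℝ) + 1) * b < lam}

/-- The open rectangle `(-R₁/2, R₁/2) × (-R₂/2, R₂/2)`. -/
def rectR (R₁ R₂ : ℝ) : Set (ℝ × ℝ) :=
  Set.Ioo (-R₁ / 2) (R₁ / 2) ×ˢ Set.Ioo (-R₂ / 2) (R₂ / 2)

/-!
In the Landau gauge `(0, -b x)` a Fourier series in `y` decomposes the magnetic form of a function
supported in a strip of width `T` into the oscillators `-d²/dx² + (b x + 2πk/T)²`, `k ∈ ℤ`. If `n`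
Landau levels lie below `lam`, then `n` linear conditions on the `k`-th Fourier coefficient raise
its energy to at least `lam`. For a rectangle of length `L` and width `T` no condition is needed
when `2π|k|/T ≥ b L/2 + √lam`, so the counting function is at most
`n (T (b L + 2√lam) / 2π + 1)`: the claimed bound plus a boundary term independent of `L`.

To remove this term, place `m` gauge-translated copies of a trial space side by side in a rectangle
of length `m L`. The dimension and the main term are both multiplied by `m`, whereas the boundary
term is not, and `m → ∞` gives the claim.
-/

section CompactSupport

lemma integrable_norm_sq_of_hasCompactSupport {X E : Type*} [TopologicalSpace X]
    [MeasurableSpace X] [OpensMeasurableSpace X] {μ : Measure X} [IsFiniteMeasureOnCompacts μ]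
    [NormedAddCommGroup E] {g : X → E} (hg : Continuous g) (hgs : HasCompactSupport g) :
    Integrable (fun x => ‖g x‖ ^ 2) μ :=
  Continuous.integrable_of_hasCompactSupport (by fun_prop)
    (hgs.norm.comp_left (g := fun t : ℝ => t ^ 2) (by simp))

variable {E F G : Type*} [NormedAddCommGroup E] [NormedSpace ℝ E] [NormedAddCommGroup F]
  [NormedSpace ℝ F] [NormedAddCommGroup G] [NormedSpace ℝ G]

lemma integrable_bilinear_of_hasCompactSupport (L : E →L[ℝ] F →L[ℝ] G) {u : ℝ → E} {v : ℝ → F}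
    (hu : Continuous u) (hv : Continuous v) (hvs : HasCompactSupport v) :
    Integrable fun x => L (u x) (v x) := by
  refine Continuous.integrable_of_hasCompactSupport (by fun_prop) (hvs.mono fun x hx hvx => hx ?_)
  simp [hvx]

lemma integral_bilinear_deriv_eq_neg (L : E →L[ℝ] F →L[ℝ] G) {u : ℝ → E} {v : ℝ → F}
    (hu : ContDiff ℝ 1 u) (hv : ContDiff ℝ 1 v) (hvs : HasCompactSupport v) :
    ∫ x, L (u x) (deriv v x) = -∫ x, L (deriv u x) (v x) :=
  integral_bilinear_hasDerivAt_right_eq_neg_left_of_integrable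
    (fun x _ => (hu.differentiable one_ne_zero x).hasDerivAt)
    (fun x _ => (hv.differentiable one_ne_zero x).hasDerivAt)
    (integrable_bilinear_of_hasCompactSupport L hu.continuous (hv.continuous_deriv le_rfl)
      hvs.deriv)
    (integrable_bilinear_of_hasCompactSupport L (hu.continuous_deriv le_rfl) hv.continuous hvs)
    (integrable_bilinear_of_hasCompactSupport L hu.continuous hv.continuous hvs)

lemma exists_hasCompactSupport_hasDerivAt [CompleteSpace F] {h : ℝ → F} (hc : Continuous h)
    (hs : HasCompactSupport h) (h0 : ∫ x, h x = 0) :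
    ∃ H : ℝ → F, HasCompactSupport H ∧ ∀ x, HasDerivAt H (h x) x := by
  obtain ⟨r, hr⟩ := hs.isCompact.isBounded.subset_ball 0
  have support_subset : Function.support h ⊆ Set.Ioo (-r) r := by
    simpa [Real.ball_eq_Ioo] using (subset_tsupport h).trans hr
  refine ⟨fun x => ∫ t in (-r)..x, h t, HasCompactSupport.intro (isCompact_Icc (a := -r) (b := r))
    fun x hx => ?_, fun x => intervalIntegral.integral_hasDerivAt_right
      (hc.intervalIntegrable _ _) hc.stronglyMeasurable.stronglyMeasurableAtFilter hc.continuousAt⟩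
  rcases lt_or_ge x (-r) with hlt | hge
  · refine intervalIntegral.integral_zero_ae (Eventually.of_forall fun t ht => ?_)
    by_contra hne
    rw [Set.uIoc_of_ge hlt.le] at ht
    linarith [(support_subset hne).1, ht.2]
  · have hgt : r < x := by
      by_contra hle
      exact hx ⟨hge, not_lt.1 hle⟩
    rw [intervalIntegral.integral_eq_integral_of_support_subset, h0]
    exact support_subset.trans fun t ht => ⟨ht.1, (ht.2.trans hgt).le⟩

end CompactSupport

section LadderOperators

variable {F : Type*} [NormedAddCommGroup F] [NormedSpace ℝ F]

/-- The annihilation operator `a = d/dx + (b x + κ)` of the harmonic oscillator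
`-d²/dx² + (b x + κ)²`, acting on vector-valued functions. -/
def annihilation (b κ : ℝ) (w : ℝ → F) (x : ℝ) : F := deriv w x + (b * x + κ) • w x

/-- The creation operator `a* = -d/dx + (b x + κ)`, the formal adjoint of `annihilation`. -/
def creation (b κ : ℝ) (w : ℝ → F) (x : ℝ) : F := (b * x + κ) • w x - deriv w x

/-- The quadratic form `⟨w, (-d²/dx² + (b x + κ)²) w⟩` of the harmonic oscillator. -/
def oscillatorEnergy (b κ : ℝ) (w : ℝ → F) : ℝ :=
  ∫ x, (‖deriv w x‖ ^ 2 + ‖(b * x + κ) • w x‖ ^ 2)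

/-- The ground state `exp (-(b x² / 2 + κ x))` of the harmonic oscillator, which spans the kernel
of `annihilation`; it is not normalised. -/
def groundState (b κ x : ℝ) : ℝ := exp (-(b * x ^ 2 / 2 + κ * x))

/-- The pairing of `w` with `xʲ` times the ground state. For `j < n` these functions span the
eigenspaces of the `n` lowest levels, just as the first `n` Hermite functions do. -/
def groundStateMoment (b κ : ℝ) (j : ℕ) (w : ℝ → F) : F :=
  ∫ x, (x ^ j * groundState b κ x) • w x

variable {b κ : ℝ} {w f : ℝ → F}

lemma groundState_pos (b κ x : ℝ) : 0 < groundState b κ x := exp_pos _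

lemma contDiff_groundState (b κ : ℝ) : ContDiff ℝ 1 (groundState b κ) := by
  unfold groundState; fun_prop

lemma hasDerivAt_groundState (b κ x : ℝ) :
    HasDerivAt (groundState b κ) (-(b * x + κ) * groundState b κ x) x := by
  have exponent : HasDerivAt (fun x : ℝ => -(b * x ^ 2 / 2 + κ * x)) (-(b * x + κ)) x :=
    (((((hasDerivAt_id x).pow 2).const_mul b).div_const 2).add
      ((hasDerivAt_id x).const_mul κ)).neg.congr_deriv (by push_cast [id]; ring)
  exact exponent.exp.congr_deriv (by unfold groundState; ring)

lemma groundStateMoment_add (j : ℕ) (hw : Continuous w) (hws : HasCompactSupport w)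
    (hf : Continuous f) (hfs : HasCompactSupport f) :
    groundStateMoment b κ j (w + f) = groundStateMoment b κ j w + groundStateMoment b κ j f := by
  have weight_continuous : Continuous fun x => x ^ j * groundState b κ x :=
    (continuous_pow j).mul (contDiff_groundState b κ).continuous
  simp only [groundStateMoment, Pi.add_apply, smul_add]
  exact integral_add
    (integrable_bilinear_of_hasCompactSupport (ContinuousLinearMap.lsmul ℝ ℝ) weight_continuous
      hw hws)
    (integrable_bilinear_of_hasCompactSupport (ContinuousLinearMap.lsmul ℝ ℝ) weight_continuous
      hf hfs)

lemma groundStateMoment_const_smul (b κ : ℝ) (j : ℕ) {𝕜 : Type*} [RCLike 𝕜] [NormedSpace 𝕜 F]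
    [SMulCommClass ℝ 𝕜 F] (c : 𝕜) (w : ℝ → F) :
    groundStateMoment b κ j (c • w) = c • groundStateMoment b κ j w := by
  simp only [groundStateMoment, Pi.smul_apply, smul_comm _ c, integral_smul]

lemma contDiff_oscillator_smul (b κ : ℝ) (hw : ContDiff ℝ 1 w) :
    ContDiff ℝ 1 fun x => (b * x + κ) • w x := by
  fun_prop

lemma deriv_oscillator_smul (hw : ContDiff ℝ 1 w) (x : ℝ) :
    deriv (fun x => (b * x + κ) • w x) x = (b * x + κ) • deriv w x + b • w x := by
  have affine : HasDerivAt (fun x : ℝ => b * x + κ) b x := by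
    simpa using ((hasDerivAt_id x).const_mul b).add_const κ
  exact (affine.smul (hw.differentiable one_ne_zero x).hasDerivAt).deriv

lemma continuous_annihilation (b κ : ℝ) (hw : ContDiff ℝ 1 w) :
    Continuous (annihilation b κ w) :=
  (hw.continuous_deriv le_rfl).add (contDiff_oscillator_smul b κ hw).continuous

lemma hasCompactSupport_annihilation (b κ : ℝ) (hs : HasCompactSupport w) :
    HasCompactSupport (annihilation b κ w) :=
  hs.deriv.add hs.smul_left

lemma hasDerivAt_pow_succ_mul_groundState (b κ : ℝ) (j : ℕ) (x : ℝ) :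
    HasDerivAt (fun x => x ^ (j + 1) * groundState b κ x)
      ((j + 1) * (x ^ j * groundState b κ x) - x ^ (j + 1) * groundState b κ x * (b * x + κ)) x :=
  ((hasDerivAt_pow (j + 1) x).mul (hasDerivAt_groundState b κ x)).congr_deriv (by
    push_cast [Nat.add_sub_cancel]
    ring)

lemma groundStateMoment_succ_creation (j : ℕ) (hf : ContDiff ℝ 1 f) (hfs : HasCompactSupport f) :
    groundStateMoment b κ (j + 1) (creation b κ f) = (j + 1 : ℝ) • groundStateMoment b κ j f := by
  have hg := contDiff_groundState b κ
  have hφ : ContDiff ℝ 1 fun x => x ^ (j + 1) * groundState b κ x := by fun_prop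
  have integrable_potential : Integrable fun x =>
      (x ^ (j + 1) * groundState b κ x) • (b * x + κ) • f x :=
    integrable_bilinear_of_hasCompactSupport (ContinuousLinearMap.lsmul ℝ ℝ) hφ.continuous
      (contDiff_oscillator_smul b κ hf).continuous hfs.smul_left
  have integrable_deriv : Integrable fun x => (x ^ (j + 1) * groundState b κ x) • deriv f x :=
    integrable_bilinear_of_hasCompactSupport (ContinuousLinearMap.lsmul ℝ ℝ) hφ.continuous
      (hf.continuous_deriv le_rfl) hfs.deriv
  have integrable_moment : Integrable fun x =>
      (j + 1 : ℝ) • (x ^ j * groundState b κ x) • f x :=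
    (integrable_bilinear_of_hasCompactSupport (ContinuousLinearMap.lsmul ℝ ℝ)
      (u := fun x => x ^ j * groundState b κ x) (by fun_prop) hf.continuous hfs).smul (j + 1 : ℝ)
  have by_parts : ∫ x, (x ^ (j + 1) * groundState b κ x) • deriv f x =
      -∫ x, ((j + 1 : ℝ) • (x ^ j * groundState b κ x) • f x -
        (x ^ (j + 1) * groundState b κ x) • (b * x + κ) • f x) := by
    refine (integral_bilinear_deriv_eq_neg (ContinuousLinearMap.lsmul ℝ ℝ) hφ hf hfs).trans ?_
    congr with x
    rw [(hasDerivAt_pow_succ_mul_groundState b κ j x).deriv, ContinuousLinearMap.lsmul_apply,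
      sub_smul, mul_smul, mul_smul _ (b * x + κ)]
  simp only [groundStateMoment, creation, smul_sub]
  rw [integral_sub integrable_potential integrable_deriv, by_parts,
    integral_sub integrable_moment integrable_potential, integral_smul]
  abel

-- Multiplied by the ground state `g`, the equation `a* f = w` becomes `d/dx (g f) = -g w`.
lemma exists_creation_eq [CompleteSpace F] (hw : Continuous w) (hs : HasCompactSupport w)
    (hw0 : groundStateMoment b κ 0 w = 0) :
    ∃ f : ℝ → F, ContDiff ℝ 1 f ∧ HasCompactSupport f ∧ creation b κ f = w := by
  have hg := (contDiff_groundState b κ).continuous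
  have hg0 (x : ℝ) : groundState b κ x ≠ 0 := (groundState_pos b κ x).ne'
  obtain ⟨H, hHs, hH⟩ := exists_hasCompactSupport_hasDerivAt (hg.smul hw) hs.smul_left
    (by simpa [groundStateMoment] using hw0)
  have hHc : Continuous H := continuous_iff_continuousAt.2 fun x => (hH x).continuousAt
  have hf (x : ℝ) : HasDerivAt (fun x => -(groundState b κ x)⁻¹ • H x)
      ((b * x + κ) • (-(groundState b κ x)⁻¹ • H x) - w x) x := by
    refine (((hasDerivAt_groundState b κ x).inv (hg0 x)).neg.smul (hH x)).congr_deriv ?_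
    have cancel : -(groundState b κ x)⁻¹ * groundState b κ x = -1 := by simp [hg0 x]
    have coefficient : -(-(-(b * x + κ) * groundState b κ x) / groundState b κ x ^ 2) =
        (b * x + κ) * -(groundState b κ x)⁻¹ := by
      field [hg0 x]
    simp only [Pi.smul_apply', Pi.neg_apply, Pi.inv_apply, smul_smul, cancel, coefficient]
    module
  refine ⟨_, contDiff_one_iff_deriv.2 ⟨fun x => (hf x).differentiableAt, ?_⟩, hHs.smul_left, ?_⟩
  · rw [funext fun x => (hf x).deriv]
    fun_prop (disch := assumption)
  · ext x
    rw [creation, (hf x).deriv, sub_sub_cancel]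

lemma mul_integral_norm_sq_le_oscillatorEnergy_of_le_sq {lam : ℝ} (hw : ContDiff ℝ 1 w)
    (hs : HasCompactSupport w) (hlam : ∀ x ∈ Function.support w, lam ≤ (b * x + κ) ^ 2) :
    lam * ∫ x, ‖w x‖ ^ 2 ≤ oscillatorEnergy b κ w := by
  rw [← integral_const_mul]
  refine integral_mono ((integrable_norm_sq_of_hasCompactSupport hw.continuous hs).const_mul lam)
    ((integrable_norm_sq_of_hasCompactSupport (hw.continuous_deriv le_rfl) hs.deriv).add
      (integrable_norm_sq_of_hasCompactSupport (contDiff_oscillator_smul b κ hw).continuous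
        hs.smul_left)) fun x => ?_
  have potential_bound : lam * ‖w x‖ ^ 2 ≤ ‖(b * x + κ) • w x‖ ^ 2 := by
    rw [norm_smul, mul_pow, Real.norm_eq_abs, sq_abs]
    by_cases hx : w x = 0
    · simp [hx]
    · exact mul_le_mul_of_nonneg_right (hlam x hx) (by positivity)
  exact potential_bound.trans (le_add_of_nonneg_left (by positivity))

end LadderOperators

section OscillatorLevels

open scoped RealInnerProductSpace

variable {F : Type*} [NormedAddCommGroup F] [InnerProductSpace ℝ F] {b κ : ℝ} {w f : ℝ → F}

lemma integrable_inner_of_hasCompactSupport {u v : ℝ → F} (hu : Continuous u) (hv : Continuous v)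
    (hvs : HasCompactSupport v) : Integrable fun x => ⟪u x, v x⟫ :=
  integrable_bilinear_of_hasCompactSupport (innerSL ℝ) hu hv hvs

lemma integral_inner_deriv_eq_neg {u v : ℝ → F} (hu : ContDiff ℝ 1 u) (hv : ContDiff ℝ 1 v)
    (hvs : HasCompactSupport v) : ∫ x, ⟪u x, deriv v x⟫ = -∫ x, ⟪deriv u x, v x⟫ :=
  integral_bilinear_deriv_eq_neg (innerSL ℝ) hu hv hvs

lemma two_mul_integral_inner_deriv_oscillator_smul (hw : ContDiff ℝ 1 w)
    (hs : HasCompactSupport w) :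
    2 * ∫ x, ⟪(b * x + κ) • w x, deriv w x⟫ = -(b * ∫ x, ‖w x‖ ^ 2) := by
  have integrable_cross : Integrable fun x => ⟪(b * x + κ) • w x, deriv w x⟫ :=
    integrable_inner_of_hasCompactSupport
      (contDiff_oscillator_smul b κ hw).continuous (hw.continuous_deriv le_rfl) hs.deriv
  have by_parts : ∫ x, ⟪(b * x + κ) • w x, deriv w x⟫ =
      -∫ x, ⟪(b * x + κ) • deriv w x + b • w x, w x⟫ := by
    simpa only [deriv_oscillator_smul hw] using
      integral_inner_deriv_eq_neg (contDiff_oscillator_smul b κ hw) hw hs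
  have expand : ∫ x, ⟪(b * x + κ) • deriv w x + b • w x, w x⟫ =
      (∫ x, ⟪(b * x + κ) • w x, deriv w x⟫) + b * ∫ x, ‖w x‖ ^ 2 := by
    rw [← integral_const_mul, ← integral_add integrable_cross
      ((integrable_norm_sq_of_hasCompactSupport hw.continuous hs).const_mul b)]
    congr with x
    simp only [inner_add_left, real_inner_smul_left, real_inner_self_eq_norm_sq,
      real_inner_comm (w x) (deriv w x)]
  linarith

lemma integral_norm_sq_annihilation (hw : ContDiff ℝ 1 w) (hs : HasCompactSupport w) :
    ∫ x, ‖annihilation b κ w x‖ ^ 2 = oscillatorEnergy b κ w - b * ∫ x, ‖w x‖ ^ 2 := by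
  have hWw := contDiff_oscillator_smul b κ hw
  have hw' := hw.continuous_deriv le_rfl
  rw [sub_eq_add_neg, ← two_mul_integral_inner_deriv_oscillator_smul hw hs (κ := κ),
    ← integral_const_mul, oscillatorEnergy, ← integral_add]
  · congr with x
    rw [annihilation, norm_add_sq_real, real_inner_comm]
    ring
  · exact (integrable_norm_sq_of_hasCompactSupport hw' hs.deriv).add
      (integrable_norm_sq_of_hasCompactSupport hWw.continuous hs.smul_left)
  · exact (integrable_inner_of_hasCompactSupport hWw.continuous hw' hs.deriv).const_mul 2

lemma integral_norm_sq_creation (hw : ContDiff ℝ 1 w) (hs : HasCompactSupport w) :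
    ∫ x, ‖creation b κ w x‖ ^ 2 = oscillatorEnergy b κ w + b * ∫ x, ‖w x‖ ^ 2 := by
  have hWw := contDiff_oscillator_smul b κ hw
  have hw' := hw.continuous_deriv le_rfl
  rw [← sub_neg_eq_add, ← two_mul_integral_inner_deriv_oscillator_smul hw hs (κ := κ),
    ← integral_const_mul, oscillatorEnergy, ← integral_sub]
  · congr with x
    rw [creation, norm_sub_sq_real]
    ring
  · exact (integrable_norm_sq_of_hasCompactSupport hw' hs.deriv).add
      (integrable_norm_sq_of_hasCompactSupport hWw.continuous hs.smul_left)
  · exact (integrable_inner_of_hasCompactSupport hWw.continuous hw' hs.deriv).const_mul 2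

lemma integral_inner_annihilation (hw : ContDiff ℝ 1 w) (hf : ContDiff ℝ 1 f)
    (hfs : HasCompactSupport f) :
    ∫ x, ⟪annihilation b κ w x, f x⟫ = ∫ x, ⟪w x, creation b κ f x⟫ := by
  have integrable_potential : Integrable fun x => ⟪w x, (b * x + κ) • f x⟫ :=
    integrable_inner_of_hasCompactSupport hw.continuous
      (contDiff_oscillator_smul b κ hf).continuous hfs.smul_left
  have integrable_left : Integrable fun x => ⟪deriv w x, f x⟫ :=
    integrable_inner_of_hasCompactSupport (hw.continuous_deriv le_rfl)
      hf.continuous hfs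
  have integrable_right : Integrable fun x => ⟪w x, deriv f x⟫ :=
    integrable_inner_of_hasCompactSupport hw.continuous
      (hf.continuous_deriv le_rfl) hfs.deriv
  simp only [annihilation, creation, inner_add_left, inner_sub_right, real_inner_smul_left,
    ← real_inner_smul_right]
  rw [integral_add integrable_left integrable_potential,
    integral_sub integrable_potential integrable_right, integral_inner_deriv_eq_neg hw hf hfs]
  ring

-- Expand `0 ≤ ∫ ‖a (a* f) - c f‖²`, using `∫ ⟪a (a* f), f⟫ = ∫ ‖a* f‖²`.
lemma mul_integral_norm_sq_creation_le {c : ℝ} (hc : 0 ≤ c) (hf : ContDiff ℝ 1 f)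
    (hfs : HasCompactSupport f) (hw : ContDiff ℝ 1 (creation b κ f))
    (hws : HasCompactSupport (creation b κ f))
    (hcf : c * ∫ x, ‖f x‖ ^ 2 ≤ ∫ x, ‖creation b κ f x‖ ^ 2) :
    c * ∫ x, ‖creation b κ f x‖ ^ 2 ≤
      ∫ x, ‖annihilation b κ (creation b κ f) x‖ ^ 2 := by
  set w := creation b κ f
  have integrable_sq := integrable_norm_sq_of_hasCompactSupport (μ := volume)
    (continuous_annihilation b κ hw) (hasCompactSupport_annihilation b κ hws)
  have integrable_inner :=
    integrable_inner_of_hasCompactSupport (continuous_annihilation b κ hw) hf.continuous hfs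
  have integrable_f := integrable_norm_sq_of_hasCompactSupport (μ := volume) hf.continuous hfs
  have adjoint : ∫ x, ⟪annihilation b κ w x, f x⟫ = ∫ x, ‖w x‖ ^ 2 := by
    simp only [integral_inner_annihilation hw hf hfs, ← real_inner_self_eq_norm_sq, w]
  have expand : ∫ x, ‖annihilation b κ w x - c • f x‖ ^ 2 =
      (∫ x, ‖annihilation b κ w x‖ ^ 2) - 2 * c * (∫ x, ‖w x‖ ^ 2) + c ^ 2 * ∫ x, ‖f x‖ ^ 2 := by
    rw [← adjoint, ← integral_const_mul, ← integral_const_mul,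
      ← integral_sub integrable_sq (integrable_inner.const_mul _),
      ← integral_add (integrable_sq.sub' (integrable_inner.const_mul _)) (integrable_f.const_mul _)]
    congr with x
    simp only [norm_sub_sq_real, real_inner_smul_right, norm_smul, Real.norm_eq_abs, mul_pow,
      sq_abs]
    ring
  have nonneg : 0 ≤ ∫ x, ‖annihilation b κ w x - c • f x‖ ^ 2 :=
    integral_nonneg fun x => by positivity
  nlinarith [mul_le_mul_of_nonneg_left hcf hc]

lemma two_mul_nat_mul_integral_norm_sq_le [CompleteSpace F] (hb : 0 ≤ b) (n : ℕ)
    (hw : ContDiff ℝ 1 w) (hs : HasCompactSupport w)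
    (hmom : ∀ j < n, groundStateMoment b κ j w = 0) :
    2 * n * b * ∫ x, ‖w x‖ ^ 2 ≤ ∫ x, ‖annihilation b κ w x‖ ^ 2 := by
  induction n generalizing w with
  | zero => simpa using integral_nonneg fun x => by positivity
  | succ n ih =>
    obtain ⟨f, hf, hfs, rfl⟩ := exists_creation_eq hw.continuous hs (hmom 0 n.succ_pos)
    have moments_f (j : ℕ) (hj : j < n) : groundStateMoment b κ j f = 0 := by
      have hsucc := hmom (j + 1) (by lia)
      rw [groundStateMoment_succ_creation j hf hfs] at hsucc
      exact (smul_eq_zero.1 hsucc).resolve_left (by positivity)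
    refine mul_integral_norm_sq_creation_le (by positivity) hf hfs hw hs ?_
    have ih_f := ih hf hfs moments_f
    rw [integral_norm_sq_annihilation hf hfs] at ih_f
    rw [integral_norm_sq_creation hf hfs]
    push_cast
    linarith

lemma landauLevel_mul_integral_norm_sq_le_oscillatorEnergy [CompleteSpace F] (hb : 0 ≤ b) {n : ℕ}
    (hw : ContDiff ℝ 1 w) (hs : HasCompactSupport w)
    (hmom : ∀ j < n, groundStateMoment b κ j w = 0) :
    (2 * n + 1) * b * ∫ x, ‖w x‖ ^ 2 ≤ oscillatorEnergy b κ w := by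
  have h := two_mul_nat_mul_integral_norm_sq_le hb n hw hs hmom
  rw [integral_norm_sq_annihilation hw hs] at h
  linarith

end OscillatorLevels

section MagneticForm

variable {v : ℝ × ℝ → ℂ}

lemma hasDerivAt_slice_fst (hv : Differentiable ℝ v) (x y : ℝ) :
    HasDerivAt (fun x => v (x, y)) (dX v (x, y)) x :=
  (hv (x, y)).hasFDerivAt.comp_hasDerivAt x ((hasDerivAt_id x).prodMk (hasDerivAt_const x y))

lemma hasDerivAt_slice_snd (hv : Differentiable ℝ v) (x y : ℝ) :
    HasDerivAt (fun y => v (x, y)) (dY v (x, y)) y :=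
  (hv (x, y)).hasFDerivAt.comp_hasDerivAt y ((hasDerivAt_const y x).prodMk (hasDerivAt_id y))

lemma continuous_dX (hv : ContDiff ℝ 1 v) : Continuous (dX v) :=
  (hv.continuous_fderiv one_ne_zero).clm_apply continuous_const

lemma continuous_dY (hv : ContDiff ℝ 1 v) : Continuous (dY v) :=
  (hv.continuous_fderiv one_ne_zero).clm_apply continuous_const

lemma tsupport_dX_subset (v : ℝ × ℝ → ℂ) : tsupport (dX v) ⊆ tsupport v :=
  tsupport_fderiv_apply_subset ℝ (1, 0)

lemma hasCompactSupport_dX (hvs : HasCompactSupport v) : HasCompactSupport (dX v) :=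
  hvs.fderiv_apply ℝ (1, 0)

lemma hasCompactSupport_dY (hvs : HasCompactSupport v) : HasCompactSupport (dY v) :=
  hvs.fderiv_apply ℝ (0, 1)

/-- The first component `-i ∂ₓ - A` of the magnetic momentum. -/
def momentumX (A : ℝ × ℝ → ℝ) (u : ℝ × ℝ → ℂ) (p : ℝ × ℝ) : ℂ :=
  -Complex.I * dX u p - (A p : ℂ) * u p

/-- The second component `-i ∂_y - A` of the magnetic momentum. -/
def momentumY (A : ℝ × ℝ → ℝ) (u : ℝ × ℝ → ℂ) (p : ℝ × ℝ) : ℂ :=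
  -Complex.I * dY u p - (A p : ℂ) * u p

/-- The quadratic form `∫ |(-i∇ - A) u|²` of the magnetic Schrödinger operator on `ℝ²` with vector
potential `A = (A₁, A₂)`. -/
def magneticForm (A₁ A₂ : ℝ × ℝ → ℝ) (u : ℝ × ℝ → ℂ) : ℝ :=
  ∫ p, (‖momentumX A₁ u p‖ ^ 2 + ‖momentumY A₂ u p‖ ^ 2)

variable {A : ℝ × ℝ → ℝ} {u : ℝ × ℝ → ℂ}

lemma continuous_momentumX (hA : Continuous A) (hu : ContDiff ℝ 1 u) :
    Continuous (momentumX A u) := by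
  have hdX := continuous_dX hu
  have hu' := hu.continuous
  unfold momentumX
  fun_prop

lemma continuous_momentumY (hA : Continuous A) (hu : ContDiff ℝ 1 u) :
    Continuous (momentumY A u) := by
  have hdY := continuous_dY hu
  have hu' := hu.continuous
  unfold momentumY
  fun_prop

lemma hasCompactSupport_momentumX (A : ℝ × ℝ → ℝ) (hus : HasCompactSupport u) :
    HasCompactSupport (momentumX A u) :=
  (hasCompactSupport_dX hus).mul_left.sub hus.mul_left

lemma hasCompactSupport_momentumY (A : ℝ × ℝ → ℝ) (hus : HasCompactSupport u) :
    HasCompactSupport (momentumY A u) :=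
  (hasCompactSupport_dY hus).mul_left.sub hus.mul_left

lemma support_momentumX_subset (A : ℝ × ℝ → ℝ) (u : ℝ × ℝ → ℂ) :
    Function.support (momentumX A u) ⊆ tsupport u := by
  refine fun p hp => by_contra fun hpu => hp ?_
  simp [momentumX, dX, fderiv_of_notMem_tsupport (𝕜 := ℝ) hpu, image_eq_zero_of_notMem_tsupport hpu]

lemma support_momentumY_subset (A : ℝ × ℝ → ℝ) (u : ℝ × ℝ → ℂ) :
    Function.support (momentumY A u) ⊆ tsupport u := by
  refine fun p hp => by_contra fun hpu => hp ?_
  simp [momentumY, dY, fderiv_of_notMem_tsupport (𝕜 := ℝ) hpu, image_eq_zero_of_notMem_tsupport hpu]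

lemma integrable_norm_sq_momentumX (hA : Continuous A) (hu : ContDiff ℝ 1 u)
    (hus : HasCompactSupport u) : Integrable fun p => ‖momentumX A u p‖ ^ 2 :=
  integrable_norm_sq_of_hasCompactSupport (continuous_momentumX hA hu)
    (hasCompactSupport_momentumX A hus)

lemma integrable_norm_sq_momentumY (hA : Continuous A) (hu : ContDiff ℝ 1 u)
    (hus : HasCompactSupport u) : Integrable fun p => ‖momentumY A u p‖ ^ 2 :=
  integrable_norm_sq_of_hasCompactSupport (continuous_momentumY hA hu)
    (hasCompactSupport_momentumY A hus)

lemma qb_eq_magneticForm (b : ℝ) :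
    qb b = magneticForm (fun p => b * p.2 / 2) (fun p => -(b * p.1 / 2)) := by
  ext u
  simp [qb, magneticForm, momentumX, momentumY]

/-- Translation by `a` followed by the gauge transformation `u ↦ exp (i θ) u`. -/
def gaugeShift (θ : ℝ × ℝ → ℝ) (a : ℝ × ℝ) : (ℝ × ℝ → ℂ) →ₗ[ℂ] (ℝ × ℝ → ℂ) where
  toFun u p := Complex.exp (θ p * Complex.I) * u (p - a)
  map_add' u v := by
    ext p
    exact mul_add _ _ _
  map_smul' c u := by
    ext p
    exact mul_left_comm _ _ _

variable {θ : ℝ × ℝ → ℝ}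

lemma gaugeShift_apply (θ : ℝ × ℝ → ℝ) (a : ℝ × ℝ) (u : ℝ × ℝ → ℂ) (p : ℝ × ℝ) :
    gaugeShift θ a u p = Complex.exp (θ p * Complex.I) * u (p - a) :=
  rfl

lemma fderiv_gaugeShift_apply (a : ℝ × ℝ) (hθ : Differentiable ℝ θ) (hu : Differentiable ℝ u)
    (p w : ℝ × ℝ) : fderiv ℝ (gaugeShift θ a u) p w = Complex.exp (θ p * Complex.I) *
      (fderiv ℝ u (p - a) w + fderiv ℝ θ p w * Complex.I * u (p - a)) := by
  have phase : HasFDerivAt (fun p => Complex.exp (θ p * Complex.I)) _ p :=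
    ((Complex.ofRealCLM.hasFDerivAt.comp p (hθ p).hasFDerivAt).mul_const Complex.I).cexp
  have shifted : HasFDerivAt (fun p => u (p - a)) (fderiv ℝ u (p - a)) p :=
    (hu (p - a)).hasFDerivAt.comp p ((hasFDerivAt_id p).sub_const a)
  rw [HasFDerivAt.fderiv (f := gaugeShift θ a u) (phase.mul shifted)]
  simp only [Function.comp_apply, Complex.ofRealCLM_apply, add_apply, smul_apply, smul_eq_mul,
    ContinuousLinearMap.comp_apply]
  ring

lemma momentumX_gaugeShift (A : ℝ × ℝ → ℝ) (a : ℝ × ℝ) (hθ : Differentiable ℝ θ)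
    (hu : Differentiable ℝ u) (p : ℝ × ℝ) :
    momentumX (fun p => A (p - a) + dXr θ p) (gaugeShift θ a u) p =
      Complex.exp (θ p * Complex.I) * momentumX A u (p - a) := by
  simp only [momentumX, dX, dXr, fderiv_gaugeShift_apply a hθ hu, gaugeShift_apply]
  push_cast
  linear_combination (-fderiv ℝ θ p (1, 0) * Complex.exp (θ p * Complex.I) * u (p - a)) *
    Complex.I_sq

lemma momentumY_gaugeShift (A : ℝ × ℝ → ℝ) (a : ℝ × ℝ) (hθ : Differentiable ℝ θ)
    (hu : Differentiable ℝ u) (p : ℝ × ℝ) :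
    momentumY (fun p => A (p - a) + dYr θ p) (gaugeShift θ a u) p =
      Complex.exp (θ p * Complex.I) * momentumY A u (p - a) := by
  simp only [momentumY, dY, dYr, fderiv_gaugeShift_apply a hθ hu, gaugeShift_apply]
  push_cast
  linear_combination (-fderiv ℝ θ p (0, 1) * Complex.exp (θ p * Complex.I) * u (p - a)) *
    Complex.I_sq

lemma magneticForm_gaugeShift (A₁ A₂ : ℝ × ℝ → ℝ) (a : ℝ × ℝ) (hθ : Differentiable ℝ θ)
    (hu : Differentiable ℝ u) :
    magneticForm (fun p => A₁ (p - a) + dXr θ p) (fun p => A₂ (p - a) + dYr θ p)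
      (gaugeShift θ a u) = magneticForm A₁ A₂ u := by
  simp only [magneticForm, momentumX_gaugeShift A₁ a hθ hu, momentumY_gaugeShift A₂ a hθ hu,
    norm_mul, Complex.norm_exp_ofReal_mul_I, one_mul]
  exact integral_sub_right_eq_self (fun p => ‖momentumX A₁ u p‖ ^ 2 + ‖momentumY A₂ u p‖ ^ 2) a

lemma integral_norm_sq_gaugeShift (θ : ℝ × ℝ → ℝ) (a : ℝ × ℝ) (u : ℝ × ℝ → ℂ) :
    ∫ p, ‖gaugeShift θ a u p‖ ^ 2 = ∫ p, ‖u p‖ ^ 2 := by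
  simp only [gaugeShift_apply, norm_mul, Complex.norm_exp_ofReal_mul_I, one_mul]
  exact integral_sub_right_eq_self (fun p => ‖u p‖ ^ 2) a

end MagneticForm

section PartialFourier

open FourierTransform

/-- The Fourier transform of `v : ℝ × ℝ → ℂ` in the second variable at the frequency `ξ`, as a
function of the first variable. At `ξ = k / T` it is, up to a factor, the `k`-th Fourier coefficient
of a function supported in a strip of width `T`. -/
def partialFourier (ξ : ℝ) (v : ℝ × ℝ → ℂ) (x : ℝ) : ℂ := 𝓕 (fun y => v (x, y)) ξ

variable {v : ℝ × ℝ → ℂ}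

lemma partialFourier_eq_integral (ξ : ℝ) (v : ℝ × ℝ → ℂ) (x : ℝ) :
    partialFourier ξ v x = ∫ y, 𝐞 (-(y * ξ)) • v (x, y) :=
  Real.fourier_real_eq _ ξ

lemma slice_eq_zero_of_notMem_image_snd_tsupport (x : ℝ) {y : ℝ}
    (hy : y ∉ Prod.snd '' tsupport v) : v (x, y) = 0 :=
  image_eq_zero_of_notMem_tsupport fun hp => hy ⟨_, hp, rfl⟩

lemma hasCompactSupport_slice (hvs : HasCompactSupport v) (x : ℝ) :
    HasCompactSupport fun y => v (x, y) :=
  HasCompactSupport.intro (hvs.isCompact.image continuous_snd) fun _ =>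
    slice_eq_zero_of_notMem_image_snd_tsupport x

lemma integrable_fourierChar_smul_slice (ξ : ℝ) (hv : Continuous v) (hvs : HasCompactSupport v)
    (x : ℝ) : Integrable fun y => 𝐞 (-(y * ξ)) • v (x, y) :=
  Continuous.integrable_of_hasCompactSupport (by fun_prop)
    (hasCompactSupport_slice hvs x).smul_left

lemma partialFourier_add (ξ : ℝ) {u : ℝ × ℝ → ℂ} (hu : Continuous u) (hus : HasCompactSupport u)
    (hv : Continuous v) (hvs : HasCompactSupport v) :
    partialFourier ξ (u + v) = partialFourier ξ u + partialFourier ξ v := by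
  ext x
  simp only [partialFourier_eq_integral, Pi.add_apply, smul_add]
  exact integral_add (integrable_fourierChar_smul_slice ξ hu hus x)
    (integrable_fourierChar_smul_slice ξ hv hvs x)

lemma partialFourier_fst_mul (ξ : ℝ) (a : ℝ → ℂ) (v : ℝ × ℝ → ℂ) (x : ℝ) :
    partialFourier ξ (fun p => a p.1 * v p) x = a x * partialFourier ξ v x := by
  simp only [partialFourier_eq_integral, ← integral_const_mul, mul_smul_comm]

lemma partialFourier_const_smul (ξ : ℝ) (c : ℂ) (v : ℝ × ℝ → ℂ) :
    partialFourier ξ (c • v) = c • partialFourier ξ v :=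
  funext (partialFourier_fst_mul ξ (fun _ => c) v)

lemma continuous_partialFourier (ξ : ℝ) (hv : Continuous v) (hvs : HasCompactSupport v) :
    Continuous (partialFourier ξ v) := by
  rw [funext (partialFourier_eq_integral ξ v), ← continuousOn_univ]
  refine continuousOn_integral_of_compact_support (hvs.isCompact.image continuous_snd)
    (Continuous.continuousOn (by fun_prop)) fun x y _ hy => ?_
  rw [slice_eq_zero_of_notMem_image_snd_tsupport x hy, smul_zero]

lemma support_partialFourier_subset (ξ : ℝ) (v : ℝ × ℝ → ℂ) :
    Function.support (partialFourier ξ v) ⊆ Prod.fst '' tsupport v := by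
  intro x hx
  by_contra hxv
  have slice_eq_zero (y : ℝ) : v (x, y) = 0 :=
    image_eq_zero_of_notMem_tsupport fun hp => hxv ⟨_, hp, rfl⟩
  exact hx (by simp [partialFourier_eq_integral, slice_eq_zero])

lemma hasCompactSupport_partialFourier (ξ : ℝ) (hvs : HasCompactSupport v) :
    HasCompactSupport (partialFourier ξ v) :=
  HasCompactSupport.of_support_subset_isCompact (hvs.isCompact.image continuous_fst)
    (support_partialFourier_subset ξ v)

lemma hasDerivAt_partialFourier (ξ : ℝ) (hv : ContDiff ℝ 1 v) (hvs : HasCompactSupport v)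
    (x : ℝ) : HasDerivAt (partialFourier ξ v) (partialFourier ξ (dX v) x) x := by
  have hv_cont := hv.continuous
  have hdX := continuous_dX hv
  obtain ⟨C, hC⟩ := hdX.bounded_above_of_compact_support (hasCompactSupport_dX hvs)
  have image_compact := hvs.isCompact.image continuous_snd
  rw [funext (partialFourier_eq_integral ξ v), partialFourier_eq_integral]
  refine (hasDerivAt_integral_of_dominated_loc_of_deriv_le
    (F' := fun x y => 𝐞 (-(y * ξ)) • dX v (x, y))
    (bound := (Prod.snd '' tsupport v).indicator fun _ => C) univ_mem
    (Eventually.of_forall fun x => (integrable_fourierChar_smul_slice ξ hv_cont hvs x).1)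
    (integrable_fourierChar_smul_slice ξ hv_cont hvs x)
    (integrable_fourierChar_smul_slice ξ hdX (hasCompactSupport_dX hvs) x).1
    (Eventually.of_forall fun y x _ => ?_)
    ((integrable_indicator_iff image_compact.measurableSet).2
      (integrableOn_const image_compact.measure_lt_top.ne))
    (Eventually.of_forall fun y x _ =>
      (hasDerivAt_slice_fst (hv.differentiable one_ne_zero) x y).const_smul _)).2
  rw [Circle.norm_smul]
  refine Set.le_indicator_apply (fun _ => hC _) fun hy => ?_
  rw [slice_eq_zero_of_notMem_image_snd_tsupport x
    fun hy' => hy (Set.image_mono (tsupport_dX_subset v) hy'), norm_zero]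

lemma deriv_partialFourier (ξ : ℝ) (hv : ContDiff ℝ 1 v) (hvs : HasCompactSupport v) :
    deriv (partialFourier ξ v) = partialFourier ξ (dX v) :=
  funext fun x => (hasDerivAt_partialFourier ξ hv hvs x).deriv

lemma contDiff_partialFourier (ξ : ℝ) (hv : ContDiff ℝ 1 v) (hvs : HasCompactSupport v) :
    ContDiff ℝ 1 (partialFourier ξ v) := by
  refine contDiff_one_iff_deriv.2
    ⟨fun x => (hasDerivAt_partialFourier ξ hv hvs x).differentiableAt, ?_⟩
  rw [deriv_partialFourier ξ hv hvs]
  exact continuous_partialFourier ξ (continuous_dX hv) (hasCompactSupport_dX hvs)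

lemma partialFourier_dY (ξ : ℝ) (hv : ContDiff ℝ 1 v) (hvs : HasCompactSupport v) (x : ℝ) :
    partialFourier ξ (dY v) x = 2 * π * Complex.I * ξ * partialFourier ξ v x := by
  have hdiff := hv.differentiable one_ne_zero
  have deriv_slice : deriv (fun y => v (x, y)) = fun y => dY v (x, y) :=
    funext fun y => (hasDerivAt_slice_snd hdiff x y).deriv
  have hdY := continuous_dY hv
  have hv_cont := hv.continuous
  have integrable_deriv : Integrable (deriv fun y => v (x, y)) := by
    rw [deriv_slice]
    exact Continuous.integrable_of_hasCompactSupport (by fun_prop)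
      (hasCompactSupport_slice (hasCompactSupport_dY hvs) x)
  have key := Real.fourier_deriv
    (Continuous.integrable_of_hasCompactSupport (by fun_prop) (hasCompactSupport_slice hvs x))
    (fun y => (hasDerivAt_slice_snd hdiff x y).differentiableAt) integrable_deriv
  rw [deriv_slice] at key
  exact congrFun key ξ

lemma partialFourier_momentumX_zero (ξ : ℝ) (hv : ContDiff ℝ 1 v) (hvs : HasCompactSupport v)
    (x : ℝ) :
    partialFourier ξ (momentumX 0 v) x = -Complex.I * deriv (partialFourier ξ v) x := by
  have momentum_eq : momentumX 0 v = fun p => -Complex.I * dX v p := by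
    ext p
    simp [momentumX]
  rw [momentum_eq, partialFourier_fst_mul ξ (fun _ => -Complex.I), deriv_partialFourier ξ hv hvs]

lemma partialFourier_momentumY (ξ : ℝ) {A : ℝ → ℝ} (hA : Continuous A) (hv : ContDiff ℝ 1 v)
    (hvs : HasCompactSupport v) (x : ℝ) :
    partialFourier ξ (momentumY (fun p => A p.1) v) x =
      (2 * π * ξ - A x) • partialFourier ξ v x := by
  have hdY := continuous_dY hv
  have hv_cont := hv.continuous
  have split : momentumY (fun p => A p.1) v =
      (fun p => -Complex.I * dY v p) + fun p => (-(A p.1 : ℂ)) * v p := by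
    ext p
    simp only [momentumY, Pi.add_apply]
    ring
  have hdYs : HasCompactSupport fun p => -Complex.I * dY v p :=
    (hasCompactSupport_dY hvs).mul_left
  have hAvs : HasCompactSupport fun p : ℝ × ℝ => (-(A p.1 : ℂ)) * v p := hvs.mul_left
  rw [split, partialFourier_add ξ (by fun_prop) hdYs (by fun_prop) hAvs, Pi.add_apply,
    partialFourier_fst_mul ξ (fun _ => -Complex.I),
    partialFourier_fst_mul ξ (fun x => -(A x : ℂ)), partialFourier_dY ξ hv hvs, Complex.real_smul]
  push_cast
  linear_combination (-2 * π * ξ * partialFourier ξ v x) * Complex.I_sq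

lemma hasSum_norm_sq_fourier_div {a c : ℝ} (hac : a < c) {f : ℝ → ℂ} (hf : MemLp f 2)
    (hfs : Function.support f ⊆ Set.Ioc a c) :
    HasSum (fun k : ℤ => ‖𝓕 f (k / (c - a))‖ ^ 2) ((c - a) * ∫ y, ‖f y‖ ^ 2) := by
  have hlen : 0 < c - a := sub_pos.2 hac
  have fourier_eq (k : ℤ) : 𝓕 f (k / (c - a)) = (c - a) • fourierCoeffOn hac f k := by
    rw [fourierCoeffOn_eq_integral, smul_smul, mul_one_div_cancel hlen.ne', one_smul,
      Real.fourier_real_eq_integral_exp_smul,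
      intervalIntegral.integral_eq_integral_of_support_subset]
    · congr with y
      rw [fourier_coe_apply]
      congr 2
      push_cast
      ring
    · exact fun y hy => hfs fun h0 => hy (by simp [h0])
  have parseval := (hasSum_sq_fourierCoeffOn hac (hf.restrict _)).mul_left ((c - a) ^ 2)
  rw [intervalIntegral.integral_eq_integral_of_support_subset] at parseval
  · have hsum : (c - a) ^ 2 * (c - a)⁻¹ • ∫ y, ‖f y‖ ^ 2 = (c - a) * ∫ y, ‖f y‖ ^ 2 := by
      rw [smul_eq_mul]
      field
    simpa only [fourier_eq, norm_smul, mul_pow, Real.norm_eq_abs, sq_abs, hsum] using parseval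
  · exact fun y hy => hfs fun h0 => hy (by simp [h0])

lemma hasSum_integral_norm_sq_partialFourier {T : ℝ} (hT : 0 < T) (hv : Continuous v)
    (hvs : HasCompactSupport v)
    (hstrip : ∀ p ∈ Function.support v, p.2 ∈ Set.Ioo (-T / 2) (T / 2)) :
    HasSum (fun k : ℤ => ∫ x, ‖partialFourier (k / T) v x‖ ^ 2) (T * ∫ p, ‖v p‖ ^ 2) := by
  have parseval (x : ℝ) :
      HasSum (fun k : ℤ => ‖partialFourier (k / T) v x‖ ^ 2) (T * ∫ y, ‖v (x, y)‖ ^ 2) := by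
    have hlen : T / 2 - -T / 2 = T := by ring
    have h := hasSum_norm_sq_fourier_div (show -T / 2 < T / 2 by linarith)
      (Continuous.memLp_of_hasCompactSupport (by fun_prop) (hasCompactSupport_slice hvs x))
      (fun y hy => Set.Ioo_subset_Ioc_self (hstrip (x, y) hy))
    rwa [hlen] at h
  have hint : Integrable (fun p => ‖v p‖ ^ 2) (volume.prod volume) :=
    integrable_norm_sq_of_hasCompactSupport hv hvs
  rw [Measure.volume_eq_prod, integral_prod _ hint, ← integral_const_mul]
  refine hasSum_integral_of_dominated_convergence (fun k x => ‖partialFourier (k / T) v x‖ ^ 2)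
    (fun k => ((continuous_partialFourier _ hv hvs).norm.pow 2).aestronglyMeasurable)
    (fun k => Eventually.of_forall fun x => by simp)
    (Eventually.of_forall fun x => (parseval x).summable) ?_ (Eventually.of_forall parseval)
  simp only [fun x => (parseval x).tsum_eq]
  exact hint.integral_prod_left.const_mul T

end PartialFourier

section TestFunctions

variable {Ω Ω' : Set (ℝ × ℝ)} {u v : ℝ × ℝ → ℂ}

namespace IsTestOn

lemma contDiff_one (hu : IsTestOn Ω u) : ContDiff ℝ 1 u :=
  hu.1.of_le (by norm_cast)

lemma mono (hu : IsTestOn Ω u) (hΩ : Ω ⊆ Ω') : IsTestOn Ω' u :=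
  ⟨hu.1, hu.2.1, hu.2.2.trans hΩ⟩

lemma zero (Ω : Set (ℝ × ℝ)) : IsTestOn Ω 0 :=
  ⟨contDiff_const, HasCompactSupport.zero, by simp [tsupport_zero]⟩

lemma add (hu : IsTestOn Ω u) (hv : IsTestOn Ω v) : IsTestOn Ω (u + v) :=
  ⟨hu.1.add hv.1, hu.2.1.add hv.2.1, (tsupport_add u v).trans (Set.union_subset hu.2.2 hv.2.2)⟩

lemma const_smul (c : ℂ) (hu : IsTestOn Ω u) : IsTestOn Ω (c • u) :=
  ⟨hu.1.const_smul c, hu.2.1.comp_left (g := (c • ·)) (smul_zero c),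
    (closure_mono (Function.support_const_smul_subset c u)).trans hu.2.2⟩

lemma gaugeShift {θ : ℝ × ℝ → ℝ} (hθ : ContDiff ℝ (⊤ : ℕ∞) θ) (a : ℝ × ℝ)
    (hu : IsTestOn Ω u) : IsTestOn ((· - a) ⁻¹' Ω) (gaugeShift θ a u) := by
  have hshift : HasCompactSupport fun p => u (p - a) :=
    hu.2.1.comp_homeomorph (Homeomorph.subRight a)
  have tsupport_shift : tsupport (fun p => u (p - a)) ⊆ (· - a) ⁻¹' tsupport u :=
    tsupport_comp_subset_preimage u (continuous_sub_right a)
  refine ⟨?_, hshift.mul_left,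
    ((tsupport_mul_subset_right (f := fun p => Complex.exp (θ p * Complex.I))).trans
      tsupport_shift).trans (Set.preimage_mono hu.2.2)⟩
  exact (((Complex.ofRealCLM.contDiff.comp hθ).mul contDiff_const).cexp).mul
    (hu.1.comp (contDiff_id.sub contDiff_const))

end IsTestOn

/-- The space of test functions supported in `Ω`. -/
def testFunctions (Ω : Set (ℝ × ℝ)) : Submodule ℂ (ℝ × ℝ → ℂ) where
  carrier := {u | IsTestOn Ω u}
  zero_mem' := IsTestOn.zero Ω
  add_mem' := IsTestOn.add
  smul_mem' c _ := IsTestOn.const_smul c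

end TestFunctions

section TrialFamilies

open scoped Topology

lemma apply_sum_of_pairwise_disjoint_tsupport {ι X E : Type*} [Fintype ι] [TopologicalSpace X]
    [AddCommMonoid E] {u : ι → X → E}
    (hdisj : Pairwise fun i j => Disjoint (tsupport (u i)) (tsupport (u j)))
    {Φ : (X → E) → X → ℝ} (hΦ0 : Φ 0 = 0) (hΦ : ∀ {f g p}, f =ᶠ[𝓝 p] g → Φ f p = Φ g p)
    (p : X) : Φ (∑ i, u i) p = ∑ i, Φ (u i) p := by
  classical
  have eq_zero {f : X → E} (hf : f =ᶠ[𝓝 p] 0) : Φ f p = 0 := by rw [hΦ hf, hΦ0, Pi.zero_apply]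
  by_cases hp : ∃ i, p ∈ tsupport (u i)
  · obtain ⟨i, hi⟩ := hp
    have others (j : ι) (hj : j ≠ i) : u j =ᶠ[𝓝 p] 0 :=
      notMem_tsupport_iff_eventuallyEq.1 fun hpj => (hdisj hj).notMem_of_mem_left hpj hi
    have sum_eq : ∑ j, u j =ᶠ[𝓝 p] u i := by
      filter_upwards [(Set.toFinite {j | j ≠ i}).eventually_all.2 others] with q hq
      rw [Finset.sum_apply]
      exact Finset.sum_eq_single i (fun j _ hj => hq j hj) (by simp)
    rw [hΦ sum_eq, Finset.sum_eq_single i (fun j _ hj => eq_zero (others j hj)) (by simp)]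
  · push Not at hp
    have vanish (i : ι) : u i =ᶠ[𝓝 p] 0 := notMem_tsupport_iff_eventuallyEq.1 (hp i)
    have sum_eq : ∑ j, u j =ᶠ[𝓝 p] 0 := by
      filter_upwards [eventually_all.2 vanish] with q hq
      simp [Finset.sum_apply, hq]
    rw [eq_zero sum_eq, Finset.sum_eq_zero fun i _ => eq_zero (vanish i)]

/-- A linear family of test functions on `Ω` on which the magnetic form lies strictly below
`lam` times the squared `L²` norm, except at the parameter `0`. Parametrising the trial space by
`E`, instead of using a subspace of functions, turns orthogonal sums into products. Such a family is
automatically injective. -/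
structure IsTrialFamily {E : Type*} [AddCommGroup E] [Module ℂ E] (A₁ A₂ : ℝ × ℝ → ℝ) (lam : ℝ)
    (Ω : Set (ℝ × ℝ)) (U : E →ₗ[ℂ] (ℝ × ℝ → ℂ)) : Prop where
  isTestOn : ∀ c, IsTestOn Ω (U c)
  magneticForm_lt : ∀ c ≠ 0, magneticForm A₁ A₂ (U c) < lam * ∫ p, ‖U c p‖ ^ 2

namespace IsTrialFamily

variable {E : Type*} [AddCommGroup E] [Module ℂ E] {A₁ A₂ : ℝ × ℝ → ℝ} {lam : ℝ}
  {Ω Ω' : Set (ℝ × ℝ)} {U : E →ₗ[ℂ] (ℝ × ℝ → ℂ)}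

lemma mono (hU : IsTrialFamily A₁ A₂ lam Ω U) (hΩ : Ω ⊆ Ω') : IsTrialFamily A₁ A₂ lam Ω' U :=
  ⟨fun c => (hU.isTestOn c).mono hΩ, hU.magneticForm_lt⟩

lemma gaugeShift (hU : IsTrialFamily A₁ A₂ lam Ω U) {θ : ℝ × ℝ → ℝ}
    (hθ : ContDiff ℝ (⊤ : ℕ∞) θ) (a : ℝ × ℝ) :
    IsTrialFamily (fun p => A₁ (p - a) + dXr θ p) (fun p => A₂ (p - a) + dYr θ p) lam
      ((· - a) ⁻¹' Ω) (gaugeShift θ a ∘ₗ U) := by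
  refine ⟨fun c => (hU.isTestOn c).gaugeShift hθ a, fun c hc => ?_⟩
  rw [LinearMap.comp_apply, magneticForm_gaugeShift A₁ A₂ a (hθ.differentiable (by simp))
    ((hU.isTestOn c).1.differentiable (by simp)), integral_norm_sq_gaugeShift]
  exact hU.magneticForm_lt c hc

lemma magneticForm_le (hU : IsTrialFamily A₁ A₂ lam Ω U) (c : E) :
    magneticForm A₁ A₂ (U c) ≤ lam * ∫ p, ‖U c p‖ ^ 2 := by
  rcases eq_or_ne c 0 with rfl | hc
  · simp [magneticForm, momentumX, momentumY, dX, dY]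
  · exact (hU.magneticForm_lt c hc).le

end IsTrialFamily

section DisjointSum

variable {ι : Type*} [Fintype ι] {u : ι → ℝ × ℝ → ℂ} {A₁ A₂ : ℝ × ℝ → ℝ}

lemma integral_norm_sq_sum_of_pairwise_disjoint (hu : ∀ i, Continuous (u i))
    (hus : ∀ i, HasCompactSupport (u i))
    (hdisj : Pairwise fun i j => Disjoint (tsupport (u i)) (tsupport (u j))) :
    ∫ p, ‖(∑ i, u i) p‖ ^ 2 = ∑ i, ∫ p, ‖u i p‖ ^ 2 := by
  rw [← integral_finsetSum _ fun i _ =>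
    integrable_norm_sq_of_hasCompactSupport (hu i) (hus i)]
  refine integral_congr_ae (Eventually.of_forall fun p => ?_)
  exact apply_sum_of_pairwise_disjoint_tsupport hdisj (Φ := fun f p => ‖f p‖ ^ 2) (by ext; simp)
    (fun hfg => by rw [hfg.eq_of_nhds]) p

lemma magneticForm_sum_of_pairwise_disjoint (hA₁ : Continuous A₁) (hA₂ : Continuous A₂)
    (hu : ∀ i, ContDiff ℝ 1 (u i)) (hus : ∀ i, HasCompactSupport (u i))
    (hdisj : Pairwise fun i j => Disjoint (tsupport (u i)) (tsupport (u j))) :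
    magneticForm A₁ A₂ (∑ i, u i) = ∑ i, magneticForm A₁ A₂ (u i) := by
  have integrable_density (i : ι) :
      Integrable fun p => ‖momentumX A₁ (u i) p‖ ^ 2 + ‖momentumY A₂ (u i) p‖ ^ 2 :=
    (integrable_norm_sq_momentumX hA₁ (hu i) (hus i)).add
      (integrable_norm_sq_momentumY hA₂ (hu i) (hus i))
  simp only [magneticForm]
  rw [← integral_finsetSum _ fun i _ => integrable_density i]
  refine integral_congr_ae (Eventually.of_forall fun p => ?_)
  refine apply_sum_of_pairwise_disjoint_tsupport hdisj
    (Φ := fun f p => ‖momentumX A₁ f p‖ ^ 2 + ‖momentumY A₂ f p‖ ^ 2) ?_ (fun hfg => ?_) p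
  · ext p
    simp [momentumX, momentumY, dX, dY]
  · simp only [momentumX, momentumY, dX, dY, hfg.fderiv_eq, hfg.eq_of_nhds]

lemma IsTrialFamily.sum {E : ι → Type*} [∀ i, AddCommGroup (E i)] [∀ i, Module ℂ (E i)] {lam : ℝ}
    {Ω : ι → Set (ℝ × ℝ)} {U : ∀ i, E i →ₗ[ℂ] (ℝ × ℝ → ℂ)} (hA₁ : Continuous A₁)
    (hA₂ : Continuous A₂) (hU : ∀ i, IsTrialFamily A₁ A₂ lam (Ω i) (U i))
    (hΩ : Pairwise fun i j => Disjoint (Ω i) (Ω j)) :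
    IsTrialFamily A₁ A₂ lam (⋃ i, Ω i) (∑ i, U i ∘ₗ LinearMap.proj i) := by
  have apply_eq (c : ∀ i, E i) : (∑ i, U i ∘ₗ LinearMap.proj i) c = ∑ i, U i (c i) := by
    simp [LinearMap.sum_apply]
  have test (c : ∀ i, E i) (i : ι) := (hU i).isTestOn (c i)
  have disj (c : ∀ i, E i) :
      Pairwise fun i j => Disjoint (tsupport (U i (c i))) (tsupport (U j (c j))) :=
    fun i j hij => (hΩ hij).mono (test c i).2.2 (test c j).2.2
  refine ⟨fun c => ?_, fun c hc => ?_⟩ <;> rw [apply_eq]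
  · exact (testFunctions _).sum_mem fun i _ => (test c i).mono (Set.subset_iUnion Ω i)
  · obtain ⟨i, hi⟩ := Function.ne_iff.1 hc
    rw [magneticForm_sum_of_pairwise_disjoint hA₁ hA₂ (fun i => (test c i).contDiff_one)
        (fun i => (test c i).2.1) (disj c),
      integral_norm_sq_sum_of_pairwise_disjoint (fun i => (test c i).1.continuous)
        (fun i => (test c i).2.1) (disj c), Finset.mul_sum]
    exact Finset.sum_lt_sum (fun i _ => (hU i).magneticForm_le (c i))
      ⟨i, Finset.mem_univ i, (hU i).magneticForm_lt (c i) hi⟩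

end DisjointSum

section Tiling

lemma preimage_sub_rectR_subset {m : ℕ} (L T : ℝ) (i : Fin m) :
    (· - (((i : ℝ) - (m - 1) / 2) * L, (0 : ℝ))) ⁻¹' rectR L T ⊆ rectR (m * L) T := by
  rintro ⟨x, y⟩ ⟨⟨hx₁, hx₂⟩, hy⟩
  simp only [Prod.fst_sub, Prod.snd_sub, sub_zero] at hx₁ hx₂ hy
  have hL : 0 < L := by linarith
  have hi : (i : ℝ) + 1 ≤ m := by exact_mod_cast i.2
  have hi₀ : 0 ≤ (i : ℝ) * L := by positivity
  have him : ((i : ℝ) + 1) * L ≤ m * L := by gcongr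
  exact ⟨⟨by linarith, by linarith⟩, hy⟩

lemma disjoint_preimage_sub_rectR {m : ℕ} (L T : ℝ) {i j : Fin m} (hij : i ≠ j) :
    Disjoint ((· - (((i : ℝ) - (m - 1) / 2) * L, (0 : ℝ))) ⁻¹' rectR L T)
      ((· - (((j : ℝ) - (m - 1) / 2) * L, (0 : ℝ))) ⁻¹' rectR L T) := by
  wlog h : i < j generalizing i j
  · exact (this hij.symm (hij.symm.lt_of_le (not_lt.1 h))).symm
  rw [Set.disjoint_left]
  rintro ⟨x, y⟩ ⟨⟨hi₁, hi₂⟩, -⟩ ⟨⟨hj₁, -⟩, -⟩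
  simp only [Prod.fst_sub] at hi₁ hi₂ hj₁
  have hL : 0 < L := by linarith
  have hlt : (i : ℝ) + 1 ≤ j := by exact_mod_cast h
  have gap : ((i : ℝ) + 1) * L ≤ j * L := by gcongr
  linarith

-- The phase `-b (x + s) y / 2` turns the symmetric gauge translated by `(s, 0)` into the Landau
-- gauge `(0, -b x)`.
lemma IsTrialFamily.gaugeShift_landauGauge {E : Type*} [AddCommGroup E] [Module ℂ E] {b lam : ℝ}
    {Ω : Set (ℝ × ℝ)} {U : E →ₗ[ℂ] (ℝ × ℝ → ℂ)}
    (hU : IsTrialFamily (fun p => b * p.2 / 2) (fun p => -(b * p.1 / 2)) lam Ω U) (s : ℝ) :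
    IsTrialFamily 0 (fun p => -(b * p.1)) lam ((· - (s, (0 : ℝ))) ⁻¹' Ω)
      (_root_.gaugeShift (fun p => -(b * (p.1 + s) * p.2 / 2)) (s, 0) ∘ₗ U) := by
  have phase (p : ℝ × ℝ) : HasFDerivAt (fun p : ℝ × ℝ => -(b * (p.1 + s) * p.2 / 2))
      ((-(b * p.2 / 2)) • ContinuousLinearMap.fst ℝ ℝ ℝ +
        (-(b * (p.1 + s) / 2)) • ContinuousLinearMap.snd ℝ ℝ ℝ) p := by
    have h := (((((hasFDerivAt_fst (𝕜 := ℝ) (p := p)).add_const s).const_mul b).mul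
      (hasFDerivAt_snd (𝕜 := ℝ) (p := p))).mul_const (2⁻¹)).neg
    exact h.congr_fderiv (by module)
  convert hU.gaugeShift (θ := fun p => -(b * (p.1 + s) * p.2 / 2)) (by fun_prop) (s, 0) using 1
  · ext p
    simp [dXr, (phase p).fderiv]
  · ext p
    simp only [Prod.fst_sub, dYr, (phase p).fderiv, add_apply, smul_apply,
      ContinuousLinearMap.coe_fst', ContinuousLinearMap.coe_snd', smul_eq_mul]
    ring

lemma IsTrialFamily.exists_tiling {E : Type*} [AddCommGroup E] [Module ℂ E] {b lam L T : ℝ}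
    {U : E →ₗ[ℂ] (ℝ × ℝ → ℂ)}
    (hU : IsTrialFamily (fun p => b * p.2 / 2) (fun p => -(b * p.1 / 2)) lam (rectR L T) U)
    (m : ℕ) :
    ∃ W : (Fin m → E) →ₗ[ℂ] (ℝ × ℝ → ℂ),
      IsTrialFamily 0 (fun p => -(b * p.1)) lam (rectR (m * L) T) W :=
  ⟨_, (IsTrialFamily.sum continuous_zero (by fun_prop)
    (fun i : Fin m => hU.gaugeShift_landauGauge (((i : ℝ) - (m - 1) / 2) * L))
    fun _ _ => disjoint_preimage_sub_rectR L T).mono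
    (Set.iUnion_subset (preimage_sub_rectR_subset L T))⟩

end Tiling

end TrialFamilies

section Counting

variable {b T : ℝ} {v : ℝ × ℝ → ℂ}

/-- The `j`-th ground state moment of the Fourier coefficient of frequency `ξ` in `y`, for the
oscillator that a test function sees at this frequency in the Landau gauge. -/
def fourierMoment (b ξ : ℝ) (j : ℕ) (Ω : Set (ℝ × ℝ)) : testFunctions Ω →ₗ[ℂ] ℂ where
  toFun u := groundStateMoment b (2 * π * ξ) j (partialFourier ξ u)
  map_add' u v := by
    rw [Submodule.coe_add, partialFourier_add ξ u.2.1.continuous u.2.2.1 v.2.1.continuous v.2.2.1,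
      groundStateMoment_add _ (continuous_partialFourier ξ u.2.1.continuous u.2.2.1)
        (hasCompactSupport_partialFourier ξ u.2.2.1)
        (continuous_partialFourier ξ v.2.1.continuous v.2.2.1)
        (hasCompactSupport_partialFourier ξ v.2.2.1)]
  map_smul' c u := by
    rw [Submodule.coe_smul, partialFourier_const_smul, groundStateMoment_const_smul,
      RingHom.id_apply]

lemma oscillatorEnergy_partialFourier (b ξ : ℝ) (hv : ContDiff ℝ 1 v)
    (hvs : HasCompactSupport v) :
    oscillatorEnergy b (2 * π * ξ) (partialFourier ξ v) =
      (∫ x, ‖partialFourier ξ (momentumX 0 v) x‖ ^ 2) +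
        ∫ x, ‖partialFourier ξ (momentumY (fun p => -(b * p.1)) v) x‖ ^ 2 := by
  have hc := contDiff_partialFourier ξ hv hvs
  have hcs := hasCompactSupport_partialFourier ξ hvs
  have coefficient (x : ℝ) : 2 * π * ξ - -(b * x) = b * x + 2 * π * ξ := by ring
  simp only [partialFourier_momentumX_zero ξ hv hvs,
    partialFourier_momentumY ξ (A := fun x => -(b * x)) (by fun_prop) hv hvs, coefficient,
    norm_mul, norm_neg, Complex.norm_I, one_mul]
  exact integral_add
    (integrable_norm_sq_of_hasCompactSupport (hc.continuous_deriv le_rfl) hcs.deriv)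
    (integrable_norm_sq_of_hasCompactSupport (contDiff_oscillator_smul b _ hc).continuous
      hcs.smul_left)

lemma hasSum_oscillatorEnergy_partialFourier (b : ℝ) (hT : 0 < T) (hv : ContDiff ℝ 1 v)
    (hvs : HasCompactSupport v) (hstrip : ∀ p ∈ tsupport v, p.2 ∈ Set.Ioo (-T / 2) (T / 2)) :
    HasSum (fun k : ℤ => oscillatorEnergy b (2 * π * (k / T)) (partialFourier (k / T) v))
      (T * magneticForm 0 (fun p => -(b * p.1)) v) := by
  have hA : Continuous fun p : ℝ × ℝ => -(b * p.1) := by fun_prop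
  have hX := hasSum_integral_norm_sq_partialFourier hT (continuous_momentumX continuous_zero hv)
    (hasCompactSupport_momentumX 0 hvs) fun p hp => hstrip p (support_momentumX_subset 0 v hp)
  have hY := hasSum_integral_norm_sq_partialFourier hT (continuous_momentumY hA hv)
    (hasCompactSupport_momentumY _ hvs) fun p hp => hstrip p (support_momentumY_subset _ v hp)
  have form_eq : magneticForm 0 (fun p => -(b * p.1)) v =
      (∫ p, ‖momentumX 0 v p‖ ^ 2) + ∫ p, ‖momentumY (fun p => -(b * p.1)) v p‖ ^ 2 :=
    integral_add (integrable_norm_sq_momentumX continuous_zero hv hvs)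
      (integrable_norm_sq_momentumY hA hv hvs)
  simp only [form_eq, mul_add, oscillatorEnergy_partialFourier b _ hv hvs]
  exact hX.add hY

lemma mul_integral_norm_sq_le_magneticForm {lam : ℝ} {n : ℕ} (hb : 0 ≤ b) (hT : 0 < T)
    (hn : lam ≤ (2 * n + 1) * b) (hv : ContDiff ℝ 1 v) (hvs : HasCompactSupport v)
    (hstrip : ∀ p ∈ tsupport v, p.2 ∈ Set.Ioo (-T / 2) (T / 2)) (s : Finset ℤ)
    (hmom : ∀ k ∈ s, ∀ j < n,
      groundStateMoment b (2 * π * (k / T)) j (partialFourier (k / T) v) = 0)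
    (hfar : ∀ k ∉ s, ∀ p ∈ tsupport v, lam ≤ (b * p.1 + 2 * π * (k / T)) ^ 2) :
    lam * ∫ p, ‖v p‖ ^ 2 ≤ magneticForm 0 (fun p => -(b * p.1)) v := by
  have level_bound (k : ℤ) : lam * ∫ x, ‖partialFourier (k / T) v x‖ ^ 2 ≤
      oscillatorEnergy b (2 * π * (k / T)) (partialFourier (k / T) v) := by
    have hc := contDiff_partialFourier (k / T) hv hvs
    have hcs := hasCompactSupport_partialFourier (k / T) hvs
    by_cases hk : k ∈ s
    · exact (mul_le_mul_of_nonneg_right hn (integral_nonneg fun x => by positivity)).trans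
        (landauLevel_mul_integral_norm_sq_le_oscillatorEnergy hb hc hcs (hmom k hk))
    · refine mul_integral_norm_sq_le_oscillatorEnergy_of_le_sq hc hcs fun x hx => ?_
      obtain ⟨p, hp, rfl⟩ := support_partialFourier_subset _ v hx
      exact hfar k hk p hp
  have norm_sum := (hasSum_integral_norm_sq_partialFourier hT hv.continuous hvs
    fun p hp => hstrip p (subset_tsupport v hp)).mul_left lam
  have key := hasSum_le level_bound norm_sum
    (hasSum_oscillatorEnergy_partialFourier b hT hv hvs hstrip)
  rw [mul_left_comm] at key
  exact le_of_mul_le_mul_left key hT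

lemma IsTrialFamily.finrank_le_card_mul {E : Type*} [AddCommGroup E] [Module ℂ E]
    {U : E →ₗ[ℂ] (ℝ × ℝ → ℂ)} {lam L : ℝ} {n : ℕ} (hb : 0 ≤ b) (hT : 0 < T)
    (hU : IsTrialFamily 0 (fun p => -(b * p.1)) lam (rectR L T) U)
    (hn : lam ≤ (2 * n + 1) * b) (s : Finset ℤ)
    (hfar : ∀ k ∉ s, ∀ x ∈ Set.Ioo (-L / 2) (L / 2), lam ≤ (b * x + 2 * π * (k / T)) ^ 2) :
    Module.finrank ℂ E ≤ s.card * n := by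
  let moments : E →ₗ[ℂ] (s × Fin n → ℂ) := LinearMap.pi (fun kj =>
    fourierMoment b (kj.1 / T) kj.2 (rectR L T)) ∘ₗ U.codRestrict (testFunctions _) hU.isTestOn
  have moments_injective : Function.Injective moments := by
    refine (injective_iff_map_eq_zero moments).2 fun c hc => ?_
    by_contra hc0
    have test := hU.isTestOn c
    refine (hU.magneticForm_lt c hc0).not_ge (mul_integral_norm_sq_le_magneticForm hb hT hn
      test.contDiff_one test.2.1 (fun p hp => (test.2.2 hp).2) s (fun k hk j hj => ?_)
      fun k hk p hp => hfar k hk p.1 (test.2.2 hp).1)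
    exact congrFun hc (⟨k, hk⟩, ⟨j, hj⟩)
  simpa using LinearMap.finrank_le_finrank_of_injective moments_injective

lemma card_Icc_neg_floor_le {M : ℝ} (hM : 0 ≤ M) :
    ((Finset.Icc (-⌊M⌋) ⌊M⌋).card : ℝ) ≤ 2 * M + 1 := by
  have hfloor : 0 ≤ ⌊M⌋ := Int.floor_nonneg.2 hM
  have card_eq : ((Finset.Icc (-⌊M⌋) ⌊M⌋).card : ℤ) = 2 * ⌊M⌋ + 1 := by
    rw [Int.card_Icc]
    lia
  have card_eq_real : ((Finset.Icc (-⌊M⌋) ⌊M⌋).card : ℝ) = 2 * ⌊M⌋ + 1 := by exact_mod_cast card_eq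
  linarith [Int.floor_le M]

lemma le_sq_of_notMem_Icc_floor {lam L M x : ℝ} {k : ℤ} (hb : 0 ≤ b) (hT : 0 < T)
    (hM : b * L / 2 + √lam = 2 * π / T * M) (hk : k ∉ Finset.Icc (-⌊M⌋) ⌊M⌋)
    (hx : |x| ≤ L / 2) : lam ≤ (b * x + 2 * π * (k / T)) ^ 2 := by
  have hMk : M < |(k : ℝ)| := by
    rw [← Int.cast_abs, ← Int.floor_lt]
    contrapose! hk
    exact Finset.mem_Icc.2 (abs_le.1 hk)
  have frequency : b * L / 2 + √lam ≤ |2 * π * (k / T)| := by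
    calc b * L / 2 + √lam = 2 * π / T * M := hM
      _ ≤ 2 * π / T * |(k : ℝ)| := by gcongr
      _ = |2 * π * (k / T)| := by
        rw [abs_mul, abs_div, abs_of_pos hT, abs_of_pos two_pi_pos]
        ring
  have position : |b * x| ≤ b * L / 2 := by
    rw [abs_mul, abs_of_nonneg hb, mul_div_assoc]
    gcongr
  have triangle := abs_sub_abs_le_abs_sub (2 * π * (k / T)) (-(b * x))
  rw [abs_neg, sub_neg_eq_add, add_comm _ (b * x)] at triangle
  rw [← sq_abs]
  exact (Real.sqrt_le_iff.1 (by linarith)).2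

lemma IsTrialFamily.finrank_le {E : Type*} [AddCommGroup E] [Module ℂ E]
    {U : E →ₗ[ℂ] (ℝ × ℝ → ℂ)} {lam L : ℝ} {n : ℕ} (hb : 0 ≤ b) (hL : 0 ≤ L) (hT : 0 < T)
    (hU : IsTrialFamily 0 (fun p => -(b * p.1)) lam (rectR L T) U)
    (hn : lam ≤ (2 * n + 1) * b) :
    (Module.finrank ℂ E : ℝ) ≤ n * (T * (b * L + 2 * √lam) / (2 * π) + 1) := by
  set M : ℝ := T * (b * L / 2 + √lam) / (2 * π) with hM
  have far (k : ℤ) (hk : k ∉ Finset.Icc (-⌊M⌋) ⌊M⌋) (x : ℝ)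
      (hx : x ∈ Set.Ioo (-L / 2) (L / 2)) : lam ≤ (b * x + 2 * π * (k / T)) ^ 2 :=
    le_sq_of_notMem_Icc_floor hb hT (by rw [hM]; field) hk
      (abs_le.2 ⟨by linarith [hx.1], hx.2.le⟩)
  calc (Module.finrank ℂ E : ℝ) ≤ (Finset.Icc (-⌊M⌋) ⌊M⌋).card * n := by
        exact_mod_cast hU.finrank_le_card_mul hb hT hn _ far
    _ ≤ (2 * M + 1) * n := by gcongr; exact card_Icc_neg_floor_le (by positivity)
    _ = n * (T * (b * L + 2 * √lam) / (2 * π) + 1) := by rw [hM]; ring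

lemma le_of_forall_nat_mul_le_mul_add {d A B : ℝ} (h : ∀ m : ℕ, m * d ≤ m * A + B) : d ≤ A := by
  by_contra! hlt
  obtain ⟨m, hm⟩ := exists_nat_gt (B / (d - A))
  rw [div_lt_iff₀ (sub_pos.2 hlt)] at hm
  linarith [h m]

lemma landauCount_eq_ceil (lam : ℝ) (hb : 0 < b) :
    landauCount b lam = ⌈(lam / b - 1) / 2⌉₊ := by
  have levels_eq : {n : ℕ | (2 * (n : ℝ) + 1) * b < lam} = Set.Iio ⌈(lam / b - 1) / 2⌉₊ := by
    ext n
    rw [Set.mem_Iio, Nat.lt_ceil, lt_div_iff₀ two_pos, lt_sub_iff_add_lt, lt_div_iff₀ hb,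
      mul_comm (n : ℝ)]
    rfl
  rw [landauCount, levels_eq]
  simp

lemma le_landauCount_level (lam : ℝ) (hb : 0 < b) :
    lam ≤ (2 * landauCount b lam + 1) * b := by
  have h := Nat.le_ceil ((lam / b - 1) / 2)
  rw [← landauCount_eq_ceil lam hb, div_le_iff₀ two_pos, sub_le_iff_le_add, div_le_iff₀ hb] at h
  linarith

lemma NN_le {q nsq : (ℝ × ℝ → ℂ) → ℝ} {dom : Set (ℝ × ℝ → ℂ)} {lam B : ℝ} (hB : 0 ≤ B)
    (h : ∀ V : Submodule ℂ (ℝ × ℝ → ℂ), (V : Set (ℝ × ℝ → ℂ)) ⊆ dom →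
      (∀ u ∈ V, u ≠ 0 → q u < lam * nsq u) → (Module.finrank ℂ V : ℝ) ≤ B) :
    (NN q dom nsq lam : ℝ) ≤ B := by
  rw [← Nat.le_floor_iff hB]
  refine csSup_le' ?_
  rintro _ ⟨V, hV, rfl, hq⟩
  exact Nat.le_floor (h V hV hq)

lemma IsTrialFamily.finrank_le_landauCount {E : Type*} [AddCommGroup E] [Module ℂ E]
    [FiniteDimensional ℂ E] {U : E →ₗ[ℂ] (ℝ × ℝ → ℂ)} {lam L : ℝ} (hb : 0 < b) (hL : 0 ≤ L)
    (hT : 0 < T)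
    (hU : IsTrialFamily (fun p => b * p.2 / 2) (fun p => -(b * p.1 / 2)) lam (rectR L T) U) :
    (Module.finrank ℂ E : ℝ) ≤ b * (L * T) / (2 * π) * landauCount b lam := by
  refine le_of_forall_nat_mul_le_mul_add
    (B := landauCount b lam * (T * (2 * √lam) / (2 * π) + 1)) fun m => ?_
  obtain ⟨W, hW⟩ := hU.exists_tiling m
  have bound := hW.finrank_le hb.le (by positivity) hT (le_landauCount_level lam hb)
  rw [Module.finrank_pi_fintype] at bound
  simp only [Finset.sum_const, Finset.card_univ, Fintype.card_fin, smul_eq_mul,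
    Nat.cast_mul] at bound
  exact bound.trans_eq (by ring)

theorem landau_rectangle_upper_bound_general (b R₁ R₂ lam : ℝ)
    (hb : 0 < b) (hR₁ : 0 < R₁) (hR₂ : 0 < R₂) :
    (NNb b lam (rectR R₁ R₂) : ℝ) ≤
      b * (R₁ * R₂) / (2 * π) * (landauCount b lam : ℝ) := by
  refine NN_le (by positivity) fun V hV hq => ?_
  rcases Nat.eq_zero_or_pos (Module.finrank ℂ V) with hzero | hpos
  · rw [hzero, Nat.cast_zero]
    positivity
  have := Module.finite_of_finrank_pos hpos
  have trial : IsTrialFamily (fun p => b * p.2 / 2) (fun p => -(b * p.1 / 2)) lam (rectR R₁ R₂)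
      V.subtype :=
    ⟨fun u => hV u.2, fun u hu => qb_eq_magneticForm b ▸ hq u u.2 (by simpa using hu)⟩
  exact trial.finrank_le_landauCount hb hR₁.le hR₂

end Counting

/-- Colin de Verdière's upper bound on a rectangle. -/
theorem landau_rectangle_upper_bound (b R₁ R₂ lam : ℝ)
    (hb : 0 < b) (hR₁ : 0 < R₁) (hR₂ : 0 < R₂) (hlam : 1 < lam) :
    (NNb b lam (rectR R₁ R₂) : ℝ) ≤
      b * (R₁ * R₂) / (2 * π) * (landauCount b lam : ℝ) :=
  landau_rectangle_upper_bound_general b R₁ R₂ lam hb hR₁ hR₂
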